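/- Let H be a real Hilbert space, λ ∈ ℝ, and let (f_h) and f be proper, λ-convex, lower semicontinuous functions from H to (-∞,∞] such that for every x ∈ H and every sequence x_h → x strongly one has liminf_h f_h(x_h) ≥ f(x), and for every x ∈ H there exist y_h → x strongly with limsup_h f_h(y_h) ≤ f(x). Let x_{h,i} → x_i strongly for i = 0,1. Then for every sequence γ_h → γ uniformly in C([0,1];H), one has liminf_h Θ_{f_h,x_{h,0},x_{h,1}}(γ_h) ≥ Θ_{f,x_0,x_1}(γ). -/

import Mathlib

open Filter Topology MeasureTheory Set
open scoped ENNReal RealInnerProductSpace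

noncomputable section

attribute [local instance] Classical.propDecidable

variable {H : Type*} [NormedAddCommGroup H] [InnerProductSpace ℝ H] [CompleteSpace H]

/-- `f : H → (-∞,∞]` is proper: not identically `⊤` (and it never takes the value `⊥`). -/
def ProperFn (f : H → EReal) : Prop :=
  (∃ x, f x ≠ ⊤) ∧ ∀ x, f x ≠ ⊥

/-- `f` is `λ`-convex: `x ↦ f x - (λ/2)‖x‖²` is convex, expressed via the perturbed
convexity inequality. -/
def LambdaConvex (lam : ℝ) (f : H → EReal) : Prop :=
  ∀ x y : H, ∀ t : ℝ, 0 ≤ t → t ≤ 1 →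
    f ((1 - t) • x + t • y)
      ≤ ((1 - t : ℝ) : EReal) * f x + ((t : ℝ) : EReal) * f y
        - ((lam / 2 * (t * (1 - t)) * ‖x - y‖ ^ 2 : ℝ) : EReal)

/-- The subdifferential of a `λ`-convex function at `x` (contained in the domain of `f`). -/
def subdiff (lam : ℝ) (f : H → EReal) (x : H) : Set H :=
  {p : H | f x ≠ ⊤ ∧
    ∀ y : H, f x + ((⟪p, y - x⟫ + lam / 2 * ‖y - x‖ ^ 2 : ℝ) : EReal) ≤ f y}

/-- `∇f(x)`: the element of minimal norm of `∂f(x)` (junk value `0` if there is none). -/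
def gradMin (lam : ℝ) (f : H → EReal) (x : H) : H :=
  if h : ∃ p ∈ subdiff lam f x, ∀ q ∈ subdiff lam f x, ‖p‖ ≤ ‖q‖ then h.choose else 0

/-- `|∇f|(x) ∈ [0,∞]`, equal to `+∞` when `∂f(x) = ∅` (in particular when `f x = ⊤`). -/
def gradNorm (lam : ℝ) (f : H → EReal) (x : H) : ℝ≥0∞ :=
  if (subdiff lam f x).Nonempty then ENNReal.ofReal ‖gradMin lam f x‖ else ⊤

/-- The resolvent `J_τ(x)`: the minimizer of `y ↦ f y + ‖y-x‖²/(2τ)` (junk `0` if none). -/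
def Jres (f : H → EReal) (τ : ℝ) (x : H) : H :=
  if h : ∃ y : H, ∀ z : H,
      f y + ((‖y - x‖ ^ 2 / (2 * τ) : ℝ) : EReal)
        ≤ f z + ((‖z - x‖ ^ 2 / (2 * τ) : ℝ) : EReal)
  then h.choose else 0

/-- The Moreau–Yosida regularization `f_τ(x) = min_y (f y + ‖y-x‖²/(2τ))`. -/
def moreau (f : H → EReal) (τ : ℝ) (x : H) : ℝ :=
  (f (Jres f τ x)).toReal + ‖Jres f τ x - x‖ ^ 2 / (2 * τ)

/-- `γ` is absolutely continuous on `[a,b]` with an integrable derivative. -/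
abbrev IsACCurve (a b : ℝ) (γ : ℝ → H) : Prop :=
  ∃ g : ℝ → H, IntegrableOn g (Icc a b) ∧ ∀ t ∈ Icc a b, γ t = γ a + ∫ s in a..t, g s

/-- The action `I_f^{[a,b]}(γ) = ∫_a^b (‖γ̇‖² + |∇f|²(γ)) dt ∈ [0,∞]`, set to `+∞` when `γ`
is not absolutely continuous. -/
def actionFn (lam : ℝ) (f : H → EReal) (a b : ℝ) (γ : ℝ → H) : ℝ≥0∞ :=
  if h : IsACCurve a b γ then
    ∫⁻ t in Ioc a b, (ENNReal.ofReal (‖h.choose t‖ ^ 2) + gradNorm lam f (γ t) ^ 2)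
  else ⊤

/-- `Θ_{f,x₀,x₁}`: the action on `[0,1]` with endpoint constraints. -/
def Theta (lam : ℝ) (f : H → EReal) (x0 x1 : H) (γ : ℝ → H) : ℝ≥0∞ :=
  if γ 0 = x0 ∧ γ 1 = x1 then actionFn lam f 0 1 γ else ⊤

/-- `Γ_δ(x₀,x_δ)`: infimum of the action over curves joining the endpoints. -/
def GammaInf (lam : ℝ) (f : H → EReal) (δ : ℝ) (x0 xδ : H) : ℝ≥0∞ :=
  ⨅ (γ : ℝ → H) (_ : γ 0 = x0 ∧ γ δ = xδ), actionFn lam f 0 δ γ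

/-- Mosco convergence of `fh` to `f`: recovery sequences for the strong topology, and the
`liminf` inequality along weakly convergent sequences. -/
def Mosco (fh : ℕ → H → EReal) (f : H → EReal) : Prop :=
  (∀ x : H, ∃ xh : ℕ → H, Tendsto xh atTop (𝓝 x) ∧
      Filter.limsup (fun h => fh h (xh h)) atTop ≤ f x) ∧
  (∀ (xh : ℕ → H) (x : H),
      (∀ p : H, Tendsto (fun h => ⟪xh h, p⟫) atTop (𝓝 ⟪x, p⟫)) →
      f x ≤ Filter.liminf (fun h => fh h (xh h)) atTop)

/- Both parts of the action are lower semicontinuous for the same reason: each of their sublevel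
sets is described by a witness in a ball of a Hilbert space (a subgradient in `H`, a derivative in
`L²(a, b; H)`), and balls are weakly compact. Γ-convergence makes the subgradient inequality stable
under weak limits of the subgradients, while weak limits of derivatives are derivatives of the
limit curve. Fatou's lemma then integrates the pointwise bound for `|∇f|²`. -/

open scoped NNReal

theorem le_liminf_of_forall_ultrafilter {ι : Type*} {l : Filter ι} {u : ι → ℝ≥0∞} {a : ℝ≥0∞}
    (h : ∀ (U : Ultrafilter ι) (r : ℝ≥0), ↑U ≤ l → (∀ᶠ i in U, u i ≤ r) → a ≤ r) :
    a ≤ liminf u l := by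
  by_contra! hlt
  obtain ⟨r, hur, hra⟩ := ENNReal.lt_iff_exists_nnreal_btwn.1 hlt
  have : (l ⊓ 𝓟 {i | u i ≤ r}).NeBot :=
    frequently_mem_iff_neBot.1 ((frequently_lt_of_liminf_lt (by isBoundedDefault) hur).mono
      fun _ hi => hi.le)
  obtain ⟨U, hU⟩ := Ultrafilter.exists_le (l ⊓ 𝓟 {i | u i ≤ r})
  exact hra.not_ge (h U r (hU.trans inf_le_left) (le_principal_iff.1 (hU.trans inf_le_right)))

theorem liminf_add_liminf_le_liminf_add {ι : Type*} {l : Filter ι} {u v : ι → ℝ≥0∞} :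
    liminf u l + liminf v l ≤ liminf (fun i => u i + v i) l := by
  simp only [liminf_eq, sSup_eq_iSup]
  refine ENNReal.biSup_add_biSup_le ⟨0, by simp⟩ ⟨0, by simp⟩ fun a ha b hb => ?_
  refine le_iSup₂_of_le (a + b) ?_ le_rfl
  filter_upwards [ha, hb] with i hai hbi using add_le_add hai hbi

section WeakConvergence

variable {E : Type*} [NormedAddCommGroup E] [InnerProductSpace ℝ E] {ι : Type*} {l : Filter ι}

/-- Weak convergence in a Hilbert space, tested against vectors through the inner product. -/
def TendstoWeakly (p : ι → E) (l : Filter ι) (q : E) : Prop :=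
  ∀ v : E, Tendsto (fun i => ⟪p i, v⟫) l (𝓝 ⟪q, v⟫)

namespace TendstoWeakly

theorem of_tendsto {p : ι → E} {q : E} (h : Tendsto p l (𝓝 q)) : TendstoWeakly p l q :=
  fun _ => h.inner tendsto_const_nhds

theorem mono {l' : Filter ι} {p : ι → E} {q : E} (h : TendstoWeakly p l q) (hl : l' ≤ l) :
    TendstoWeakly p l' q :=
  fun v => (h v).mono_left hl

theorem congr' {p p' : ι → E} {q : E} (h : TendstoWeakly p l q) (hp : p =ᶠ[l] p') :
    TendstoWeakly p' l q :=
  fun v => (h v).congr' (hp.mono fun _ hi => by rw [hi])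

theorem sub {p p' : ι → E} {q q' : E} (h : TendstoWeakly p l q) (h' : TendstoWeakly p' l q') :
    TendstoWeakly (fun i => p i - p' i) l (q - q') := fun v => by
  simpa only [inner_sub_left] using (h v).sub (h' v)

theorem unique [l.NeBot] {p : ι → E} {q q' : E} (h : TendstoWeakly p l q)
    (h' : TendstoWeakly p l q') : q = q' :=
  ext_inner_right ℝ fun v => tendsto_nhds_unique (h v) (h' v)

theorem tendsto_inner {p v : ι → E} {q w : E} {C : ℝ} (hp : TendstoWeakly p l q)
    (hC : ∀ᶠ i in l, ‖p i‖ ≤ C) (hv : Tendsto v l (𝓝 w)) :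
    Tendsto (fun i => ⟪p i, v i⟫) l (𝓝 ⟪q, w⟫) := by
  have herr : Tendsto (fun i => ⟪p i, v i - w⟫) l (𝓝 0) := by
    have hbound : Tendsto (fun i => C * ‖v i - w‖) l (𝓝 0) := by
      simpa using (tendsto_iff_norm_sub_tendsto_zero.1 hv).const_mul C
    refine squeeze_zero_norm' (hC.mono fun i hi => ?_) hbound
    exact (norm_inner_le_norm _ _).trans (by gcongr)
  simpa [← inner_add_right] using herr.add (hp w)

theorem setIntegral [CompleteSpace E] {α : Type*} {_ : MeasurableSpace α} {μ : Measure α}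
    {p : ι → Lp E 2 μ} {q : Lp E 2 μ} (h : TendstoWeakly p l q) {s : Set α}
    (hs : MeasurableSet s) (hμs : μ s ≠ ∞) :
    TendstoWeakly (fun i => ∫ x in s, p i x ∂μ) l (∫ x in s, q x ∂μ) := fun v => by
  have hinner (G : Lp E 2 μ) :
      ⟪G, indicatorConstLp 2 hs hμs v⟫ = ⟪∫ x in s, G x ∂μ, v⟫ := by
    rw [real_inner_comm, L2.inner_indicatorConstLp_eq_inner_setIntegral, real_inner_comm]
  simpa only [hinner] using h (indicatorConstLp 2 hs hμs v)

end TendstoWeakly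

/- Banach–Alaoglu, read through the Riesz isometry. -/
theorem exists_tendstoWeakly_of_eventually_norm_le [CompleteSpace E] {U : Ultrafilter ι}
    {p : ι → E} {C : ℝ} (hp : ∀ᶠ i in U, ‖p i‖ ≤ C) :
    ∃ q, ‖q‖ ≤ C ∧ TendstoWeakly p U q := by
  let toDual := InnerProductSpace.toDual ℝ E
  have hcompact := WeakDual.isCompact_closedBall (𝕜 := ℝ) (0 : StrongDual ℝ E) C
  obtain ⟨φ, hφ, hlim⟩ := hcompact.ultrafilter_le_nhds'
    (U.map fun i => StrongDual.toWeakDual (toDual (p i)))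
    (hp.mono fun i hi => by simpa [toDual] using hi)
  refine ⟨toDual.symm (WeakDual.toStrongDual φ), by simpa using hφ, fun v => ?_⟩
  rw [InnerProductSpace.toDual_symm_apply]
  exact (WeakDual.eval_continuous v).continuousAt.tendsto.comp hlim

end WeakConvergence

section GammaConvergence

/-- Γ-convergence of `fh` to `f` along `l`, expressed by sequences (here: families indexed like
`fh`): the lower bound along every convergent family and the existence of recovery families. -/
structure GammaTendsto {X ι : Type*} [TopologicalSpace X] (fh : ι → X → EReal) (l : Filter ι)
    (f : X → EReal) : Prop where
  le_liminf : ∀ (x : X) (xh : ι → X), Tendsto xh l (𝓝 x) → f x ≤ liminf (fun i => fh i (xh i)) l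
  exists_recovery : ∀ x : X, ∃ xh : ι → X, Tendsto xh l (𝓝 x) ∧
    limsup (fun i => fh i (xh i)) l ≤ f x

theorem GammaTendsto.const_of_lowerSemicontinuous {X ι : Type*} [TopologicalSpace X] {l : Filter ι}
    {f : X → EReal} (hf : LowerSemicontinuous f) : GammaTendsto (fun _ => f) l f where
  le_liminf x xh hx := le_of_forall_lt_imp_le_of_dense fun a ha =>
    le_liminf_of_le (by isBoundedDefault) ((hx.eventually (hf x a ha)).mono fun _ hi => hi.le)
  exists_recovery x := ⟨fun _ => x, tendsto_const_nhds,
    limsup_le_of_le (by isBoundedDefault) (Eventually.of_forall fun _ => le_rfl)⟩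

end GammaConvergence

section Subdifferential

variable {E : Type*} [NormedAddCommGroup E] [InnerProductSpace ℝ E]
  {lam : ℝ} {f : E → EReal} {x : E}

theorem convex_subdiff : Convex ℝ (subdiff lam f x) := by
  have hinter : subdiff lam f x = ⋂ y, (fun p => ⟪p, y - x⟫) ⁻¹' {r : ℝ | f x ≠ ⊤ ∧
      f x + ((r + lam / 2 * ‖y - x‖ ^ 2 : ℝ) : EReal) ≤ f y} := by
    ext p
    simp [subdiff, forall_and]
  rw [hinter]
  refine convex_iInter fun y => ?_
  have hlower : IsLowerSet {r : ℝ | f x ≠ ⊤ ∧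
      f x + ((r + lam / 2 * ‖y - x‖ ^ 2 : ℝ) : EReal) ≤ f y} := fun r s hsr hr =>
    ⟨hr.1, le_trans (by gcongr) hr.2⟩
  exact hlower.ordConnected.convex.linear_preimage ((innerₗ E).flip (y - x))

theorem isClosed_subdiff : IsClosed (subdiff lam f x) := by
  have hcont (y : E) : Continuous fun p : E =>
      f x + ((⟪p, y - x⟫ + lam / 2 * ‖y - x‖ ^ 2 : ℝ) : EReal) := by
    have hadd (r : ℝ) : ContinuousAt (fun z : EReal × EReal => z.1 + z.2) (f x, r) :=
      EReal.continuousAt_add (Or.inr (EReal.coe_ne_bot r)) (Or.inr (EReal.coe_ne_top r))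
    have hpair : Continuous fun p : E =>
        (f x, ((⟪p, y - x⟫ + lam / 2 * ‖y - x‖ ^ 2 : ℝ) : EReal)) :=
      continuous_const.prodMk (continuous_coe_real_ereal.comp (by fun_prop))
    exact continuous_iff_continuousAt.2 fun p => (hadd _).tendsto.comp (hpair.tendsto p)
  have hinter : subdiff lam f x = {_p | f x ≠ ⊤} ∩
      ⋂ y, {p | f x + ((⟪p, y - x⟫ + lam / 2 * ‖y - x‖ ^ 2 : ℝ) : EReal) ≤ f y} := by
    ext p
    simp [subdiff]
  rw [hinter]
  exact isClosed_const.inter (isClosed_iInter fun y => isClosed_le (hcont y) continuous_const)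

theorem gradMin_mem_subdiff_and_norm_le [CompleteSpace E] (hne : (subdiff lam f x).Nonempty) :
    gradMin lam f x ∈ subdiff lam f x ∧ ∀ q ∈ subdiff lam f x, ‖gradMin lam f x‖ ≤ ‖q‖ := by
  have hex : ∃ p ∈ subdiff lam f x, ∀ q ∈ subdiff lam f x, ‖p‖ ≤ ‖q‖ := by
    obtain ⟨p, hp, hmin⟩ := exists_norm_eq_iInf_of_complete_convex hne
      isClosed_subdiff.isComplete convex_subdiff 0
    simp only [zero_sub, norm_neg] at hmin
    refine ⟨p, hp, fun q hq => hmin.trans_le ?_⟩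
    exact ciInf_le (f := fun w : subdiff lam f x => ‖(w : E)‖)
      ⟨0, forall_mem_range.2 fun _ => norm_nonneg _⟩ ⟨q, hq⟩
  rw [gradMin, dif_pos hex]
  exact hex.choose_spec

theorem gradNorm_le_coe_iff [CompleteSpace E] {r : ℝ≥0} :
    gradNorm lam f x ≤ r ↔ ∃ p ∈ subdiff lam f x, ‖p‖ ≤ r := by
  by_cases hne : (subdiff lam f x).Nonempty
  · obtain ⟨hmem, hmin⟩ := gradMin_mem_subdiff_and_norm_le hne
    rw [gradNorm, if_pos hne, ← ENNReal.ofReal_coe_nnreal,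
      ENNReal.ofReal_le_ofReal_iff r.coe_nonneg]
    exact ⟨fun h => ⟨_, hmem, h⟩, fun ⟨p, hp, hpr⟩ => (hmin p hp).trans hpr⟩
  · rw [gradNorm, if_neg hne]
    simp [not_nonempty_iff_eq_empty.1 hne]

variable {ι : Type*} {l : Filter ι} {fh : ι → E → EReal} {xh : ι → E}

/- Along a recovery family `yh → y`, the subgradient inequality pairs the weakly convergent `p`
with the strongly convergent `yh - xh`, so it passes to the limit. -/
theorem mem_subdiff_of_tendstoWeakly [l.NeBot] {p : ι → E} {q : E} {C : ℝ}
    (hf : ∃ y, f y ≠ ⊤) (hx : Tendsto xh l (𝓝 x))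
    (hliminf : f x ≤ liminf (fun i => fh i (xh i)) l)
    (hrec : ∀ y, ∃ yh : ι → E, Tendsto yh l (𝓝 y) ∧ limsup (fun i => fh i (yh i)) l ≤ f y)
    (hmem : ∀ᶠ i in l, p i ∈ subdiff lam (fh i) (xh i)) (hC : ∀ᶠ i in l, ‖p i‖ ≤ C)
    (hp : TendstoWeakly p l q) : q ∈ subdiff lam f x := by
  have hsub (y : E) : f x + ((⟪q, y - x⟫ + lam / 2 * ‖y - x‖ ^ 2 : ℝ) : EReal) ≤ f y := by
    obtain ⟨yh, hy, hlimsup⟩ := hrec y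
    let s i := ((⟪p i, yh i - xh i⟫ + lam / 2 * ‖yh i - xh i‖ ^ 2 : ℝ) : EReal)
    have hs : Tendsto s l (𝓝 ((⟪q, y - x⟫ + lam / 2 * ‖y - x‖ ^ 2 : ℝ) : EReal)) :=
      (continuous_coe_real_ereal.tendsto _).comp ((hp.tendsto_inner hC (hy.sub hx)).add
        (((hy.sub hx).norm.pow 2).const_mul _))
    calc f x + ((⟪q, y - x⟫ + lam / 2 * ‖y - x‖ ^ 2 : ℝ) : EReal)
        ≤ liminf (fun i => fh i (xh i)) l + liminf s l := by rw [hs.liminf_eq]; gcongr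
      _ ≤ liminf (fun i => fh i (xh i) + s i) l := EReal.le_liminf_add
      _ ≤ liminf (fun i => fh i (yh i)) l :=
        liminf_le_liminf (hmem.mono fun i hi => hi.2 (yh i))
      _ ≤ f y := (liminf_le_limsup).trans hlimsup
  refine ⟨fun htop => ?_, hsub⟩
  obtain ⟨y, hy⟩ := hf
  exact hy (top_le_iff.1 (by simpa only [htop, EReal.top_add_coe] using hsub y))

theorem gradNorm_le_liminf [CompleteSpace E] (hf : ∃ y, f y ≠ ⊤) (hΓ : GammaTendsto fh l f)
    (hx : Tendsto xh l (𝓝 x)) :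
    gradNorm lam f x ≤ liminf (fun i => gradNorm lam (fh i) (xh i)) l := by
  refine le_liminf_of_forall_ultrafilter fun U r hU hr => ?_
  obtain ⟨p, hp⟩ := (hr.mono fun i hi => gradNorm_le_coe_iff.1 hi).choice
  have hbound : ∀ᶠ i in U, ‖p i‖ ≤ r := hp.mono fun i hi => hi.2
  obtain ⟨q, hq, hpq⟩ := exists_tendstoWeakly_of_eventually_norm_le hbound
  refine gradNorm_le_coe_iff.2 ⟨q, mem_subdiff_of_tendstoWeakly hf (hx.mono_left hU)
    ((hΓ.le_liminf x xh hx).trans (liminf_le_liminf_of_le hU)) (fun y => ?_)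
    (hp.mono fun i hi => hi.1) hbound hpq, hq⟩
  obtain ⟨yh, hy, hlimsup⟩ := hΓ.exists_recovery y
  exact ⟨yh, hy.mono_left hU, (limsup_le_limsup_of_le hU).trans hlimsup⟩

theorem lowerSemicontinuous_gradNorm [CompleteSpace E] (hf : LowerSemicontinuous f) :
    LowerSemicontinuous (gradNorm lam f) := by
  by_cases htop : ∃ y, f y ≠ ⊤
  · exact lowerSemicontinuous_iff_le_liminf.2 fun x =>
      gradNorm_le_liminf htop (.const_of_lowerSemicontinuous hf) tendsto_id
  · push Not at htop
    have : gradNorm lam f = fun _ => ⊤ := by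
      ext x
      simp [gradNorm, subdiff, htop]
    rw [this]
    exact lowerSemicontinuous_const

theorem aemeasurable_gradNorm_comp [CompleteSpace E] (hf : LowerSemicontinuous f)
    {γ : ℝ → E} {s : Set ℝ} (hs : MeasurableSet s) (hγ : ContinuousOn γ s) :
    AEMeasurable (fun t => gradNorm lam f (γ t)) (volume.restrict s) := by
  have hlsc : LowerSemicontinuous (s.domRestrict fun t => gradNorm lam f (γ t)) :=
    (lowerSemicontinuous_gradNorm hf).comp (continuousOn_iff_continuous_domRestrict.1 hγ)
  exact aemeasurable_restrict_of_measurable_subtype hs hlsc.measurable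

end Subdifferential

section KineticEnergy

variable {E : Type*} [NormedAddCommGroup E] [InnerProductSpace ℝ E]

/-- The kinetic part `∫_a^b ‖γ̇‖² dt` of the action, `+∞` when `γ` is not absolutely continuous. -/
def kineticEnergy (a b : ℝ) (γ : ℝ → E) : ℝ≥0∞ :=
  if h : IsACCurve a b γ then eLpNorm h.choose 2 (volume.restrict (Ioc a b)) ^ 2 else ⊤

theorem eLpNorm_two_sq_eq_lintegral {α F : Type*} {_ : MeasurableSpace α} [NormedAddCommGroup F]
    (μ : Measure α) (g : α → F) :
    eLpNorm g 2 μ ^ 2 = ∫⁻ t, ENNReal.ofReal (‖g t‖ ^ 2) ∂μ := by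
  have h := eLpNorm_nnreal_pow_eq_lintegral (μ := μ) (f := g) (two_ne_zero (α := ℝ≥0))
  simpa [ENNReal.ofReal_pow] using h

theorem actionFn_eq_kineticEnergy_add (lam : ℝ) (f : E → EReal) (a b : ℝ) (γ : ℝ → E) :
    actionFn lam f a b γ
      = kineticEnergy a b γ + ∫⁻ t in Ioc a b, gradNorm lam f (γ t) ^ 2 := by
  unfold actionFn kineticEnergy
  split_ifs with h
  · have hmeas := (h.choose_spec.1.mono_set Ioc_subset_Icc_self).aestronglyMeasurable
    rw [lintegral_add_left' (hmeas.norm.aemeasurable.pow_const 2).ennreal_ofReal,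
      eLpNorm_two_sq_eq_lintegral]
  · rw [top_add]

variable [CompleteSpace E] {a b : ℝ} {γ : ℝ → E}

theorem ae_eq_of_forall_intervalIntegral_eq {g g' : ℝ → E} (hg : IntegrableOn g (Icc a b))
    (hg' : IntegrableOn g' (Icc a b))
    (h : ∀ t ∈ Icc a b, ∫ s in a..t, g s = ∫ s in a..t, g' s) :
    g =ᵐ[volume.restrict (Ioc a b)] g' := by
  rcases lt_or_ge b a with hba | hab
  · rw [Ioc_eq_empty hba.not_gt, Measure.restrict_empty]
    exact ae_zero ▸ eventually_bot
  have hderiv := ((intervalIntegrable_iff_integrableOn_Icc_of_le hab).2 hg).ae_hasDerivAt_integral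
  have hderiv' := ((intervalIntegrable_iff_integrableOn_Icc_of_le hab).2 hg').ae_hasDerivAt_integral
  rw [← Measure.restrict_congr_set Ioo_ae_eq_Ioc]
  refine (ae_restrict_iff' measurableSet_Ioo).2 ?_
  filter_upwards [hderiv, hderiv'] with t ht ht' htab
  have hmem : t ∈ uIcc a b := uIcc_of_le hab ▸ Ioo_subset_Icc_self htab
  refine (ht hmem a left_mem_uIcc).unique ((ht' hmem a left_mem_uIcc).congr_of_eventuallyEq ?_)
  filter_upwards [Ioo_mem_nhds htab.1 htab.2] with s hs using h s (Ioo_subset_Icc_self hs)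

theorem kineticEnergy_eq_eLpNorm_sq {g : ℝ → E} (hg : IntegrableOn g (Icc a b))
    (hγ : ∀ t ∈ Icc a b, γ t = γ a + ∫ s in a..t, g s) :
    kineticEnergy a b γ = eLpNorm g 2 (volume.restrict (Ioc a b)) ^ 2 := by
  have hAC : IsACCurve a b γ := ⟨g, hg, hγ⟩
  rw [kineticEnergy, dif_pos hAC]
  congr 1
  refine eLpNorm_congr_ae (ae_eq_of_forall_intervalIntegral_eq hAC.choose_spec.1 hg fun t ht => ?_)
  exact add_left_cancel ((hAC.choose_spec.2 t ht).symm.trans (hγ t ht))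

theorem kineticEnergy_le_coe_sq_iff {r : ℝ≥0} :
    kineticEnergy a b γ ≤ (r : ℝ≥0∞) ^ 2 ↔
      ∃ G : Lp E 2 (volume.restrict (Ioc a b)), ‖G‖ ≤ r ∧
        ∀ t ∈ Icc a b, γ t = γ a + ∫ s in a..t, G s := by
  have hnorm (G : Lp E 2 (volume.restrict (Ioc a b))) :
      eLpNorm G 2 (volume.restrict (Ioc a b)) ≤ r ↔ ‖G‖ ≤ r := by
    rw [← Lp.enorm_def, enorm_le_coe, ← NNReal.coe_le_coe, coe_nnnorm]
  constructor
  · intro hr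
    have hAC : IsACCurve a b γ := by
      by_contra hAC
      simp [kineticEnergy, hAC] at hr
    obtain ⟨g, hg, hγ⟩ := hAC
    rw [kineticEnergy_eq_eLpNorm_sq hg hγ, ENNReal.pow_le_pow_left_iff two_ne_zero] at hr
    have hL2 : MemLp g 2 (volume.restrict (Ioc a b)) :=
      ⟨(hg.mono_set Ioc_subset_Icc_self).aestronglyMeasurable, hr.trans_lt ENNReal.coe_lt_top⟩
    refine ⟨hL2.toLp g, (hnorm _).1 ((eLpNorm_congr_ae hL2.coeFn_toLp).trans_le hr), ?_⟩
    intro t ht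
    rw [hγ t ht, intervalIntegral.integral_of_le ht.1, intervalIntegral.integral_of_le ht.1]
    congr 1
    exact integral_congr_ae
      (ae_restrict_of_ae_restrict_of_subset (Ioc_subset_Ioc_right ht.2) hL2.coeFn_toLp.symm)
  · rintro ⟨G, hG, hγ⟩
    have hint : IntegrableOn G (Icc a b) :=
      (integrableOn_Icc_iff_integrableOn_Ioc).2 ((Lp.memLp G).integrable one_le_two)
    rw [kineticEnergy_eq_eLpNorm_sq hint hγ, ENNReal.pow_le_pow_left_iff two_ne_zero]
    exact (hnorm G).2 hG

theorem TendstoWeakly.intervalIntegral {ι : Type*} {l : Filter ι}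
    {G : ι → Lp E 2 (volume.restrict (Ioc a b))} {G₀ : Lp E 2 (volume.restrict (Ioc a b))}
    (h : TendstoWeakly G l G₀) {t : ℝ} (ht : t ∈ Icc a b) :
    TendstoWeakly (fun i => ∫ s in a..t, G i s) l (∫ s in a..t, G₀ s) := by
  have hrestrict : (volume.restrict (Ioc a b)).restrict (Ioc a t) = volume.restrict (Ioc a t) :=
    Measure.restrict_restrict_of_subset (Ioc_subset_Ioc_right ht.2)
  simpa only [intervalIntegral.integral_of_le ht.1, hrestrict] using
    h.setIntegral measurableSet_Ioc (measure_ne_top _ (Ioc a t))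

theorem kineticEnergy_le_liminf {ι : Type*} {l : Filter ι} {γh : ι → ℝ → E}
    (hγ : ∀ t ∈ Icc a b, TendstoWeakly (fun i => γh i t) l (γ t)) :
    kineticEnergy a b γ ≤ liminf (fun i => kineticEnergy a b (γh i)) l := by
  refine le_liminf_of_forall_ultrafilter fun U r hU hr => ?_
  have hsq : (r : ℝ≥0∞) = (NNReal.sqrt r : ℝ≥0∞) ^ 2 := by
    rw [← ENNReal.coe_pow, NNReal.sq_sqrt]
  simp only [hsq, kineticEnergy_le_coe_sq_iff] at hr ⊢
  obtain ⟨G, hG⟩ := hr.choice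
  obtain ⟨G₀, hG₀, hlim⟩ :=
    exists_tendstoWeakly_of_eventually_norm_le (hG.mono fun i hi => hi.1)
  refine ⟨G₀, hG₀, fun t ht => eq_add_of_sub_eq' ?_⟩
  have hincr : TendstoWeakly (fun i => γh i t - γh i a) U (γ t - γ a) :=
    ((hγ t ht).sub (hγ a (left_mem_Icc.2 (ht.1.trans ht.2)))).mono hU
  refine hincr.unique ((hlim.intervalIntegral ht).congr' (hG.mono fun i hi => ?_))
  exact eq_sub_of_add_eq' (hi.2 t ht).symm

end KineticEnergy

section Action

variable {ι : Type*} {l : Filter ι} [l.IsCountablyGenerated] {lam : ℝ} {fh : ι → H → EReal}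
  {f : H → EReal} {γh : ι → ℝ → H} {γ : ℝ → H}

theorem lintegral_gradNorm_sq_le_liminf {s : Set ℝ} (hs : MeasurableSet s)
    (hfh : ∀ i, LowerSemicontinuous (fh i)) (hf : ∃ x, f x ≠ ⊤) (hΓ : GammaTendsto fh l f)
    (hγh : ∀ i, ContinuousOn (γh i) s)
    (hγ : ∀ t ∈ s, Tendsto (fun i => γh i t) l (𝓝 (γ t))) :
    ∫⁻ t in s, gradNorm lam f (γ t) ^ 2
      ≤ liminf (fun i => ∫⁻ t in s, gradNorm lam (fh i) (γh i t) ^ 2) l :=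
  calc ∫⁻ t in s, gradNorm lam f (γ t) ^ 2
      ≤ ∫⁻ t in s, liminf (fun i => gradNorm lam (fh i) (γh i t) ^ 2) l := by
        refine setLIntegral_mono' hs fun t ht => ?_
        have hle := gradNorm_le_liminf (lam := lam) hf hΓ (hγ t ht)
        simp only [sq]
        exact (mul_le_mul' hle hle).trans ENNReal.le_liminf_mul
    _ ≤ _ := lintegral_liminf_le' fun i =>
        (aemeasurable_gradNorm_comp (hfh i) hs (hγh i)).pow_const 2

theorem actionFn_le_liminf {a b : ℝ} (hfh : ∀ i, LowerSemicontinuous (fh i))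
    (hf : ∃ x, f x ≠ ⊤) (hΓ : GammaTendsto fh l f) (hγh : ∀ i, ContinuousOn (γh i) (Icc a b))
    (hγ : ∀ t ∈ Icc a b, Tendsto (fun i => γh i t) l (𝓝 (γ t))) :
    actionFn lam f a b γ ≤ liminf (fun i => actionFn lam (fh i) a b (γh i)) l := by
  simp only [actionFn_eq_kineticEnergy_add]
  refine le_trans (add_le_add ?_ ?_) liminf_add_liminf_le_liminf_add
  · exact kineticEnergy_le_liminf fun t ht => TendstoWeakly.of_tendsto (hγ t ht)
  · exact lintegral_gradNorm_sq_le_liminf measurableSet_Ioc hfh hf hΓ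
      (fun i => (hγh i).mono Ioc_subset_Icc_self) fun t ht => hγ t (Ioc_subset_Icc_self ht)

theorem statement1_general {xh0 xh1 : ι → H} {x0 x1 : H}
    (hfh : ∀ i, LowerSemicontinuous (fh i)) (hf : ∃ x, f x ≠ ⊤) (hΓ : GammaTendsto fh l f)
    (hx0 : Tendsto xh0 l (𝓝 x0)) (hx1 : Tendsto xh1 l (𝓝 x1))
    (hγh : ∀ i, ContinuousOn (γh i) (Icc 0 1))
    (hγ : ∀ t ∈ Icc (0 : ℝ) 1, Tendsto (fun i => γh i t) l (𝓝 (γ t))) :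
    Theta lam f x0 x1 γ ≤ liminf (fun i => Theta lam (fh i) (xh0 i) (xh1 i) (γh i)) l := by
  by_cases hfreq : ∃ᶠ i in l, γh i 0 = xh0 i ∧ γh i 1 = xh1 i
  · have h0 : γ 0 = x0 := tendsto_nhds_unique_of_frequently_eq (hγ 0 (by simp)) hx0
      (hfreq.mono fun _ hi => hi.1)
    have h1 : γ 1 = x1 := tendsto_nhds_unique_of_frequently_eq (hγ 1 (by simp)) hx1
      (hfreq.mono fun _ hi => hi.2)
    rw [Theta, if_pos ⟨h0, h1⟩]
    refine (actionFn_le_liminf hfh hf hΓ hγh hγ).trans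
      (liminf_le_liminf (Eventually.of_forall fun i => ?_))
    unfold Theta
    split_ifs
    exacts [le_rfl, le_top]
  · refine le_top.trans (le_liminf_of_le (by isBoundedDefault) ?_)
    exact (not_frequently.1 hfreq).mono fun i hi => by rw [Theta, if_neg hi]

end Action

/-- the Γ-liminf inequality. -/
theorem statement1 (lam : ℝ) (fh : ℕ → H → EReal) (f : H → EReal)
    (hfh_proper : ∀ h, ProperFn (fh h)) (hfh_conv : ∀ h, LambdaConvex lam (fh h))
    (hfh_lsc : ∀ h, LowerSemicontinuous (fh h))
    (hf_proper : ProperFn f) (hf_conv : LambdaConvex lam f) (hf_lsc : LowerSemicontinuous f)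
    (hliminf : ∀ (x : H) (xh : ℕ → H), Tendsto xh atTop (𝓝 x) →
      f x ≤ Filter.liminf (fun h => fh h (xh h)) atTop)
    (hlimsup : ∀ x : H, ∃ yh : ℕ → H, Tendsto yh atTop (𝓝 x) ∧
      Filter.limsup (fun h => fh h (yh h)) atTop ≤ f x)
    (xh0 xh1 : ℕ → H) (x0 x1 : H)
    (hx0 : Tendsto xh0 atTop (𝓝 x0)) (hx1 : Tendsto xh1 atTop (𝓝 x1))
    (γh : ℕ → ℝ → H) (γ : ℝ → H) (hγh : ∀ h, ContinuousOn (γh h) (Icc 0 1))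
    (hγ : ContinuousOn γ (Icc 0 1)) (hconv : TendstoUniformlyOn γh γ atTop (Icc 0 1)) :
    Theta lam f x0 x1 γ
      ≤ Filter.liminf (fun h => Theta lam (fh h) (xh0 h) (xh1 h) (γh h)) atTop := by
  exact statement1_general hfh_lsc hf_proper.1 ⟨hliminf, hlimsup⟩ hx0 hx1 hγh
    fun t ht => hconv.tendsto_at ht

end
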